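/- Let X be a set, m ≥ 1, E a finite type with maps i, t : E → Fin m, and for each e ∈ E let X_{t(e)}, X_{i(e)} ⊆ X and f_e : X → X satisfy f_e(X_{t(e)}) ⊆ X_{i(e)}. On Y := X × Fin m set D_e := X_{t(e)} × {t(e)} and g_e(x,v) := (f_e(x), i(e)). Suppose B ⊆ Y satisfies B = ⋃_{e ∈ E} g_e(B ∩ D_e) (e.g., B is the local attractor of the local IFS (D_e, g_e)_{e∈E}). Then, setting B_v := {x ∈ X : (x,v) ∈ B} for each v ∈ Fin m, the family (B_v) satisfies the graph-directed fixed-point equations: B_v = ⋃_{e ∈ E, i(e) = v} f_e(B_{t(e)}) for every v ∈ Fin m. -/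

import Mathlib

/-! For every `B ⊆ Y`, the slice of `F(B)` over `v` is the union of the `f e '' (B_{t e} ∩ X_{t e})`
over the edges `e` with `i e = v`, and it is contained in `X_v`. If `B` is invariant, the second
fact gives `B_{t e} ⊆ X_{t e}`, so the intersections in the first one may be dropped. -/

section

variable {X Y V E : Type*}

/-- The local Hutchinson–Barnsley operator `F(B) = ⋃ e, g e (B ∩ D e)` of the local iterated
function system with domains `D e` and maps `g e`. The maps are total; only their restrictions to
the domains matter. -/
def localHutchinson (D : E → Set Y) (g : E → Y → Y) (B : Set Y) : Set Y :=
  ⋃ e, g e '' (B ∩ D e)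

theorem slice_localHutchinson (i t : E → V) (S : E → Set X) (f : E → X → X)
    (B : Set (X × V)) (v : V) :
    {x | (x, v) ∈ localHutchinson (fun e ↦ S e ×ˢ {t e}) (fun e p ↦ (f e p.1, i e)) B} =
      ⋃ e ∈ {e | i e = v}, f e '' ({x | (x, t e) ∈ B} ∩ S e) := by
  ext x
  simp only [localHutchinson, Set.mem_ofPred_eq, Set.mem_iUnion, Set.mem_image, Set.mem_inter_iff,
    Set.mem_prod, Set.mem_singleton_iff, Prod.mk.injEq, exists_prop]
  constructor
  · rintro ⟨e, ⟨y, _⟩, ⟨hyB, hyS, rfl⟩, hfy, hv⟩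
    exact ⟨e, hv, y, ⟨hyB, hyS⟩, hfy⟩
  · rintro ⟨e, hv, y, ⟨hyB, hyS⟩, hfy⟩
    exact ⟨e, (y, t e), ⟨hyB, hyS, rfl⟩, hfy, hv⟩

theorem slice_localHutchinson_subset (i t : E → V) (Xv : V → Set X) (f : E → X → X)
    (hmaps : ∀ e, f e '' Xv (t e) ⊆ Xv (i e)) (B : Set (X × V)) (v : V) :
    {x | (x, v) ∈ localHutchinson (fun e ↦ Xv (t e) ×ˢ {t e}) (fun e p ↦ (f e p.1, i e)) B} ⊆
      Xv v := by
  rw [slice_localHutchinson i t (fun e ↦ Xv (t e))]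
  refine Set.iUnion₂_subset ?_
  rintro e rfl
  exact (Set.image_mono Set.inter_subset_right).trans (hmaps e)

theorem graphDirected_slices_fixed_point_general (i t : E → V) (Xv : V → Set X)
    (f : E → X → X) (hmaps : ∀ e, f e '' Xv (t e) ⊆ Xv (i e))
    (g : E → X × V → X × V) (hg : ∀ e p, g e p = (f e p.1, i e))
    (D : E → Set (X × V)) (hD : ∀ e, D e = Xv (t e) ×ˢ {t e})
    (B : Set (X × V)) (hB : B = localHutchinson D g B) (v : V) :
    {x | (x, v) ∈ B} = ⋃ e ∈ {e | i e = v}, f e '' {x | (x, t e) ∈ B} := by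
  obtain rfl : g = fun e p ↦ (f e p.1, i e) := funext₂ hg
  obtain rfl : D = fun e ↦ Xv (t e) ×ˢ {t e} := funext hD
  have slice_subset (w : V) : {x | (x, w) ∈ B} ⊆ Xv w := by
    rw [hB]
    exact slice_localHutchinson_subset i t Xv f hmaps B w
  calc {x | (x, v) ∈ B}
      = {x | (x, v) ∈ localHutchinson (fun e ↦ Xv (t e) ×ˢ {t e})
          (fun e p ↦ (f e p.1, i e)) B} := by rw [← hB]
    _ = ⋃ e ∈ {e | i e = v}, f e '' ({x | (x, t e) ∈ B} ∩ Xv (t e)) :=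
      slice_localHutchinson i t (fun e ↦ Xv (t e)) f B v
    _ = ⋃ e ∈ {e | i e = v}, f e '' {x | (x, t e) ∈ B} := by
      simp only [Set.inter_eq_left.mpr (slice_subset _)]

end

/-- Let `E` be a finite edge type with vertex maps `i, t : E → Fin m`,
subsets `Xv v ⊆ X` and maps `f e : X → X` with `f e (Xv (t e)) ⊆ Xv (i e)`. On the
enriched space `Y = X × Fin m`, set `D e = Xv (t e) × {t e}` and
`g e (x, v) = (f e x, i e)`. If `B ⊆ Y` satisfies `B = ⋃ e, g e '' (B ∩ D e)`
(e.g. `B` is the local attractor of the local IFS `(D e, g e)`), then the slices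
`B_v = {x : (x, v) ∈ B}` satisfy the graph-directed fixed-point equations
`B_v = ⋃_{e : i e = v} f e '' B_{t e}`. -/
theorem graphDirected_slices_fixed_point {X : Type*} {m : ℕ} (hm : 0 < m)
    (E : Type*) [Finite E]
    (i t : E → Fin m) (Xv : Fin m → Set X)
    (f : E → X → X) (hmaps : ∀ e, f e '' Xv (t e) ⊆ Xv (i e))
    (g : E → X × Fin m → X × Fin m) (hg : ∀ e p, g e p = (f e p.1, i e))
    (D : E → Set (X × Fin m)) (hD : ∀ e, D e = Xv (t e) ×ˢ ({t e} : Set (Fin m)))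
    (B : Set (X × Fin m)) (hB : B = ⋃ e, g e '' (B ∩ D e)) :
    ∀ v : Fin m, {x : X | (x, v) ∈ B}
      = ⋃ e ∈ {e : E | i e = v}, f e '' {x : X | (x, t e) ∈ B} :=
  graphDirected_slices_fixed_point_general i t Xv f hmaps g hg D hD B hB
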